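/- arXiv:math/0306404 — 2 statements merged into one kernel-verified Lean document; each statement's English description precedes it below -/
import Mathlib

section
/- Let M be a self-adjoint operator, (P_n) orthogonal projections with ranges L_n ⊆ Dom(M²), and suppose λ is an eigenvalue of M with eigenvector ψ ≠ 0 for which condition (H) holds: ‖P_n M P_n ψ − λψ‖ → 0 and ‖P_n M² P_n ψ − λ²ψ‖ → 0, and P_n ψ → ψ. Then σ_n(λ) → 0 as n → ∞. -/
open Filter Topology

noncomputable section

variable {H : Type*} [NormedAddCommGroup H] [InnerProductSpace ℂ H] [CompleteSpace H]

/-- `(M - z)²` as a linear map. -/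
def sqz (M : H →ₗ[ℂ] H) (z : ℂ) : H →ₗ[ℂ] H :=
  (M - z • LinearMap.id) ∘ₗ (M - z • LinearMap.id)

/-- `σ_n(z) = inf {‖P (M - z)² v‖ / ‖v‖ : 0 ≠ v ∈ ran P}`. -/
def sigma2 (M : H →ₗ[ℂ] H) (P : H →L[ℂ] H) (z : ℂ) : ℝ :=
  sInf {r : ℝ | ∃ v, v ∈ LinearMap.range (P : H →ₗ[ℂ] H) ∧ v ≠ 0 ∧ r = ‖P (sqz M z v)‖ / ‖v‖}

/-!
A fixed vector `v` of `P` is a competitor in the infimum defining `σ`, and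
`P (M - z)² v = P M² v - 2z P M v + z² v`. Along trial vectors `v → ψ ≠ 0` with `P M v → zψ` and
`P M² v → z²ψ` this tends to `z²ψ - 2z²ψ + z²ψ = 0`, while `‖v‖` stays away from `0`.
Condition (H) is the case `v = P_n ψ`.
-/

section TrialVectors

omit [CompleteSpace H]

theorem sqz_apply (M : H →ₗ[ℂ] H) (z : ℂ) (v : H) :
    sqz M z v = M (M v) - (2 * z) • M v + z ^ 2 • v := by
  simp only [sqz, LinearMap.comp_apply, LinearMap.sub_apply, LinearMap.smul_apply,
    LinearMap.id_apply, map_sub, map_smul]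
  module

theorem sigma2_nonneg (M : H →ₗ[ℂ] H) (P : H →L[ℂ] H) (z : ℂ) : 0 ≤ sigma2 M P z := by
  refine Real.sInf_nonneg ?_
  rintro _ ⟨v, -, -, rfl⟩
  positivity

theorem sigma2_le_norm_div_norm (M : H →ₗ[ℂ] H) {P : H →L[ℂ] H} (z : ℂ) {v : H}
    (hv : v ∈ LinearMap.range (P : H →ₗ[ℂ] H)) (hv0 : v ≠ 0) :
    sigma2 M P z ≤ ‖P (sqz M z v)‖ / ‖v‖ := by
  refine csInf_le ⟨0, ?_⟩ ⟨v, hv, hv0, rfl⟩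
  rintro _ ⟨w, -, -, rfl⟩
  positivity

variable {ι : Type*} {f : Filter ι} {M : H →ₗ[ℂ] H} {P : ι → H →L[ℂ] H} {z : ℂ} {v : ι → H} {ψ : H}

theorem tendsto_sigma2_zero_of_tendsto_apply_sqz_zero
    (hv : ∀ i, v i ∈ LinearMap.range (P i : H →ₗ[ℂ] H)) (hvψ : Tendsto v f (𝓝 ψ)) (hψ : ψ ≠ 0)
    (hsqz : Tendsto (fun i => P i (sqz M z (v i))) f (𝓝 0)) :
    Tendsto (fun i => sigma2 M (P i) z) f (𝓝 0) := by
  have hquot : Tendsto (fun i => ‖P i (sqz M z (v i))‖ / ‖v i‖) f (𝓝 0) := by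
    simpa only [norm_zero, zero_div, Pi.div_def] using
      hsqz.norm.div hvψ.norm (norm_ne_zero_iff.2 hψ)
  refine squeeze_zero' (.of_forall fun i => sigma2_nonneg M (P i) z) ?_ hquot
  filter_upwards [hvψ.eventually_ne hψ] with i hi
  exact sigma2_le_norm_div_norm M z (hv i) hi

theorem tendsto_apply_sqz_zero (hfix : ∀ i, P i (v i) = v i)
    (hv : Tendsto v f (𝓝 ψ)) (hM : Tendsto (fun i => P i (M (v i))) f (𝓝 (z • ψ)))
    (hM2 : Tendsto (fun i => P i (M (M (v i)))) f (𝓝 (z ^ 2 • ψ))) :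
    Tendsto (fun i => P i (sqz M z (v i))) f (𝓝 0) := by
  have hlim : z ^ 2 • ψ - (2 * z) • z • ψ + z ^ 2 • ψ = 0 := by module
  simp only [sqz_apply, map_add, map_sub, map_smul, hfix]
  exact hlim ▸ (hM2.sub (hM.const_smul (2 * z))).add (hv.const_smul (z ^ 2))

theorem sigma_tendsto_zero_at_eigenvalue_general (hfix : ∀ i, P i (v i) = v i)
    (hv : Tendsto v f (𝓝 ψ)) (hψ : ψ ≠ 0)
    (hM : Tendsto (fun i => P i (M (v i))) f (𝓝 (z • ψ)))
    (hM2 : Tendsto (fun i => P i (M (M (v i)))) f (𝓝 (z ^ 2 • ψ))) :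
    Tendsto (fun i => sigma2 M (P i) z) f (𝓝 0) :=
  tendsto_sigma2_zero_of_tendsto_apply_sqz_zero (fun i => ⟨v i, hfix i⟩) hv hψ
    (tendsto_apply_sqz_zero hfix hv hM hM2)

end TrialVectors

/-- If `λ` is an eigenvalue of the self-adjoint operator `M` with eigenvector `ψ ≠ 0`
satisfying condition (H) (and `P_n ψ → ψ`), then `σ_n(λ) → 0`. -/
theorem sigma_tendsto_zero_at_eigenvalue
    (D : Submodule ℂ H) (M : H →ₗ[ℂ] H)
    -- `M` restricted to `D` is a (densely defined) self-adjoint operator: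
    (hdense : Dense (D : Set H))
    (hsym : ∀ u ∈ D, ∀ v ∈ D, (inner ℂ (M u) v : ℂ) = inner ℂ u (M v))
    (hsa : ∀ x y : H, (∀ u ∈ D, (inner ℂ (M u) x : ℂ) = inner ℂ u y) → x ∈ D ∧ M x = y)
    -- `P n` is an orthogonal projection with finite-dimensional range contained in `Dom M²`:
    (P : ℕ → H →L[ℂ] H)
    (hPsa : ∀ n, IsSelfAdjoint (P n))
    (hPidem : ∀ n, IsIdempotentElem (P n))
    (hPfin : ∀ n, FiniteDimensional ℂ (LinearMap.range (P n : H →ₗ[ℂ] H)))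
    (hPdom : ∀ n, ∀ v ∈ LinearMap.range (P n : H →ₗ[ℂ] H), v ∈ D ∧ M v ∈ D)
    -- the eigenpair `(λ, ψ)` and condition (H):
    (l : ℝ) (ψ : H) (hψ0 : ψ ≠ 0) (hψD : ψ ∈ D) (heig : M ψ = (l : ℂ) • ψ)
    (hH1 : Tendsto (fun n => ‖P n (M (P n ψ)) - (l : ℂ) • ψ‖) atTop (𝓝 0))
    (hH2 : Tendsto (fun n => ‖P n (M (M (P n ψ))) - ((l : ℂ) ^ 2) • ψ‖) atTop (𝓝 0))
    (hPψ : Tendsto (fun n => P n ψ) atTop (𝓝 ψ)) :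
    Tendsto (fun n => sigma2 M (P n) (l : ℂ)) atTop (𝓝 0) :=
  sigma_tendsto_zero_at_eigenvalue_general (fun n => DFunLike.congr_fun (hPidem n) ψ) hPψ hψ0
    (tendsto_iff_norm_sub_tendsto_zero.2 hH1) (tendsto_iff_norm_sub_tendsto_zero.2 hH2)

end
end

section
/- Let E ⊊ (−π, π] be a finite union of semi-open intervals with both E and E^c of positive measure, m(x) = 1 on E and −1 on E^c, M multiplication by m on L²(−π, π), and M_n the compression of M to L_n := span{e^{ikx} : |k| ≤ n}. Then every point μ ∈ (−1, 1) of the spectral gap is a point of spectral pollution: there exists a sequence μ_n ∈ Spec M_n with μ_n → μ, even though Spec M = {−1, 1}. -/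
open Filter Topology MeasureTheory

attribute [local instance] Classical.propDecidable

noncomputable section

/-- Lebesgue measure on `(-π, π]`. -/
def mπ : Measure ℝ := volume.restrict (Set.Ioc (-Real.pi) Real.pi)

/-- The space `L²(-π, π)`. -/
abbrev Hsp : Type := Lp ℂ 2 mπ

/-!
Let `r = t - m` with `t` strictly between the essential infimum and supremum of `m`. The Toeplitz
operator `T` on the Hardy space with symbol `r` is not bounded below (Hartman–Wintner). Otherwise
`T`, being self-adjoint, would be onto, so `T f = 1` for some `f` in `H²`. Then
`⟪e^{ikx} f, r f⟫ = 0` for all `k > 0`, hence for all `k ≠ 0` because `r` is real, so `r |f|²` is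
almost everywhere constant. As `r` takes both signs the constant is `0`; thus `r f = 0` and
`T f = 0`, a contradiction.

So for each `ε > 0` some analytic polynomial `v` satisfies `‖T v‖ < ε ‖v‖`. Multiplication by
`e^{-inx}` commutes with `M` and, for `n` large, moves `v` into `L_n`. Since `L_n ⊆ e^{-inx} H²`,
projecting onto `L_n` gives at most the norm that projecting onto `e^{-inx} H²` does, so
`‖(M_n - t) e^{-inx} v‖ < ε ‖v‖`, and the self-adjoint `M_n` has an eigenvalue within `ε` of `t`.
-/

open scoped ENNReal NNReal BoundedContinuousFunction

lemma exists_seq_tendsto_of_eventually_exists_dist_lt {X : Type*} [PseudoMetricSpace X]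
    {s : ℕ → Set X} {x : X} (hne : ∀ n, (s n).Nonempty)
    (h : ∀ ε > 0, ∀ᶠ n in atTop, ∃ y ∈ s n, dist y x < ε) :
    ∃ u : ℕ → X, (∀ n, u n ∈ s n) ∧ Tendsto u atTop (𝓝 x) := by
  have hinf : Tendsto (fun n => Metric.infDist x (s n)) atTop (𝓝 0) := by
    refine Metric.tendsto_nhds.2 fun ε hε => (h ε hε).mono fun n ⟨y, hy, hyx⟩ => ?_
    rw [Real.dist_0_eq_abs, abs_of_nonneg Metric.infDist_nonneg]
    exact (Metric.infDist_le_dist_of_mem hy).trans_lt (dist_comm y x ▸ hyx)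
  have hnear (n : ℕ) : ∃ y ∈ s n, dist x y < Metric.infDist x (s n) + 1 / ((n : ℝ) + 1) :=
    (Metric.infDist_lt_iff (hne n)).1 (lt_add_of_pos_right _ Nat.one_div_pos_of_nat)
  choose u hu hux using hnear
  refine ⟨u, hu, tendsto_iff_dist_tendsto_zero.2 ?_⟩
  refine squeeze_zero (fun _ => dist_nonneg) (fun n => (dist_comm (u n) x).trans_le (hux n).le) ?_
  simpa using hinf.add tendsto_one_div_add_atTop_nhds_zero_nat

section Compression

variable {𝕜 H : Type*} [RCLike 𝕜] [NormedAddCommGroup H] [InnerProductSpace 𝕜 H]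

lemma surjective_of_isSelfAdjoint_of_le_norm [CompleteSpace H] {T : H →L[𝕜] H}
    (hT : IsSelfAdjoint T) {ε : ℝ} (hε : 0 < ε) (hbelow : ∀ v, ε * ‖v‖ ≤ ‖T v‖) :
    Function.Surjective T := by
  have hanti : AntilipschitzWith (Real.toNNReal ε⁻¹) T := by
    refine T.antilipschitz_of_bound fun v => ?_
    rw [Real.coe_toNNReal _ (inv_nonneg.2 hε.le), inv_mul_eq_div, le_div_iff₀' hε]
    exact hbelow v
  have hker : T.ker = ⊥ := LinearMap.ker_eq_bot.2 hanti.injective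
  refine (T.bijective_iff_dense_range_and_antilipschitz.2 ⟨?_, _, hanti⟩).2
  rw [Submodule.topologicalClosure_eq_top_iff, T.orthogonal_range, hT.adjoint_eq, hker]

lemma exists_hasEigenvalue_norm_sub_lt [FiniteDimensional 𝕜 H] {T : H →ₗ[𝕜] H}
    (hT : T.IsSymmetric) {z : 𝕜} {ε : ℝ} {v : H} (hv : ‖T v - z • v‖ < ε * ‖v‖) :
    ∃ w, Module.End.HasEigenvalue T w ∧ ‖w - z‖ < ε := by
  by_contra! hfar
  let b := hT.eigenvectorBasis rfl
  have hε : 0 < ε := pos_of_mul_pos_left ((norm_nonneg _).trans_lt hv) (norm_nonneg v)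
  have hcoord (i) : inner 𝕜 (b i) (T v - z • v) =
      ((hT.eigenvalues rfl i : 𝕜) - z) * inner 𝕜 (b i) v := by
    rw [inner_sub_right, ← hT, hT.apply_eigenvectorBasis rfl i, inner_smul_left, inner_smul_right,
      RCLike.conj_ofReal, sub_mul]
  refine hv.not_ge (le_of_sq_le_sq ?_ (norm_nonneg _))
  calc (ε * ‖v‖) ^ 2 = ∑ i, ε ^ 2 * ‖inner 𝕜 (b i) v‖ ^ 2 := by
        rw [mul_pow, ← b.sum_sq_norm_inner_right v, Finset.mul_sum]
    _ ≤ ∑ i, ‖inner 𝕜 (b i) (T v - z • v)‖ ^ 2 := by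
        gcongr with i
        rw [hcoord, norm_mul, mul_pow]
        gcongr
        exact hfar _ (hT.hasEigenvalue_eigenvalues rfl i)
    _ = ‖T v - z • v‖ ^ 2 := b.sum_sq_norm_inner_right _

lemma norm_starProjection_le_of_map_le {K L : Submodule 𝕜 H} [K.HasOrthogonalProjection]
    [L.HasOrthogonalProjection] {U : H →ₗᵢ[𝕜] H} (hU : K.map U.toLinearMap ≤ L) (x : H) :
    ‖K.starProjection x‖ ≤ ‖L.starProjection (U x)‖ := by
  set y := K.starProjection x with hy
  have hyK : y ∈ K := K.starProjection_apply_mem x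
  have hUyL : U y ∈ L := hU ⟨y, hyK, rfl⟩
  have hsq : ((‖y‖ ^ 2 : ℝ) : 𝕜) = inner 𝕜 (U y) (L.starProjection (U x)) := by
    rw [← Submodule.inner_starProjection_left_eq_right, Submodule.starProjection_eq_self_iff.2 hUyL,
      U.inner_map_map, ← Submodule.starProjection_eq_self_iff.2 hyK,
      Submodule.inner_starProjection_left_eq_right, ← hy, inner_self_eq_norm_sq_to_K,
      Submodule.starProjection_eq_self_iff.2 hyK, RCLike.ofReal_pow]
  have hle : ‖y‖ ^ 2 ≤ ‖y‖ * ‖L.starProjection (U x)‖ :=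
    calc ‖y‖ ^ 2 = ‖((‖y‖ ^ 2 : ℝ) : 𝕜)‖ := by simp
      _ ≤ ‖U y‖ * ‖L.starProjection (U x)‖ := hsq ▸ norm_inner_le_norm _ _
      _ = ‖y‖ * ‖L.starProjection (U x)‖ := by rw [U.norm_map]
  nlinarith [norm_nonneg y, norm_nonneg (L.starProjection (U x))]

variable (K : Submodule 𝕜 H) [K.HasOrthogonalProjection]

/-- The compression `P_K A|_K` of an operator `A` to a subspace `K`, as an operator on `K`: a
truncation `M_n` when `K = L_n`, a Toeplitz operator when `K` is the Hardy space. -/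
def compression (A : H →L[𝕜] H) : K →L[𝕜] K :=
  K.orthogonalProjectionOnto ∘L A ∘L K.subtypeL

@[simp]
lemma coe_compression_apply (A : H →L[𝕜] H) (v : K) :
    (compression K A v : H) = K.starProjection (A v) :=
  rfl

lemma isSelfAdjoint_compression [CompleteSpace H] [CompleteSpace K] {A : H →L[𝕜] H}
    (hA : IsSelfAdjoint A) : IsSelfAdjoint (compression K A) := by
  simpa only [compression, K.adjoint_subtypeL] using hA.adjoint_conj K.subtypeL

lemma norm_compression_apply_sub_smul (A : H →L[𝕜] H) (z : 𝕜) (v : K) :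
    ‖compression K A v - z • v‖ =
      ‖K.starProjection ((algebraMap 𝕜 (H →L[𝕜] H) z - A) v)‖ := by
  have hv : K.starProjection v = v := Submodule.starProjection_eq_self_iff.2 v.2
  rw [norm_sub_rev, Submodule.coe_norm, Submodule.coe_sub, Submodule.coe_smul,
    coe_compression_apply, sub_apply, map_sub, Algebra.algebraMap_eq_smul_one]
  change _ = ‖K.starProjection (z • (v : H)) - _‖
  rw [map_smul, hv]

end Compression

section FourierUniqueness

lemma ae_eq_zero_of_forall_integral_boundedContinuous_smul_eq_zero {X E : Type*}
    [TopologicalSpace X] [HasOuterApproxClosed X] [MeasurableSpace X] [BorelSpace X]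
    [NormedAddCommGroup E] [NormedSpace ℝ E] [CompleteSpace E] {μ : Measure X} {F : X → E}
    (hF : Integrable F μ) (h : ∀ φ : X →ᵇ ℝ≥0, ∫ x, (φ x : ℝ) • F x ∂μ = 0) : F =ᵐ[μ] 0 := by
  refine ae_eq_zero_of_forall_setIntegral_isClosed_eq_zero hF fun s hs => ?_
  have hlim : Tendsto (fun n => ∫ x, (hs.apprSeq n x : ℝ) • F x ∂μ) atTop
      (𝓝 (∫ x, s.indicator F x ∂μ)) := by
    refine tendsto_integral_of_dominated_convergence (fun x => ‖F x‖) (fun n => ?_) hF.norm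
      (fun n => ?_) ?_
    · exact Continuous.aestronglyMeasurable (by fun_prop) |>.smul hF.1
    · refine ae_of_all _ fun x => ?_
      rw [norm_smul, Real.norm_of_nonneg (NNReal.coe_nonneg _)]
      exact mul_le_of_le_one_left (norm_nonneg _)
        (HasOuterApproxClosed.apprSeq_apply_le_one hs n x)
    · refine ae_of_all _ fun x => ?_
      have hx := tendsto_pi_nhds.1 (HasOuterApproxClosed.tendsto_apprSeq hs) x
      have hcoe : s.indicator F x = ((s.indicator (fun _ => (1 : ℝ≥0)) x : ℝ≥0) : ℝ) • F x := by
        by_cases hxs : x ∈ s <;> simp [hxs]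
      exact hcoe ▸ (NNReal.tendsto_coe.2 hx).smul_const (F x)
  rw [integral_indicator hs.measurableSet] at hlim
  exact tendsto_nhds_unique hlim (by simp [h])

variable {T : ℝ} [Fact (0 < T)] {E : Type*} [NormedAddCommGroup E] [NormedSpace ℂ E]
  [CompleteSpace E] {F : AddCircle T → E}

lemma ae_eq_zero_of_fourierCoeff_eq_zero (hF : Integrable F AddCircle.haarAddCircle)
    (h : ∀ n, fourierCoeff F n = 0) : F =ᵐ[AddCircle.haarAddCircle] 0 := by
  let Λ : C(AddCircle T, ℂ) →L[ℂ] E :=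
    ((ContinuousLinearMap.lsmul ℂ ℂ).lpPairing AddCircle.haarAddCircle ∞ 1).flip (hF.toL1 F) ∘L
      ContinuousMap.toLp ∞ AddCircle.haarAddCircle ℂ
  have hΛ (ψ : C(AddCircle T, ℂ)) : Λ ψ = ∫ x, ψ x • F x ∂AddCircle.haarAddCircle := by
    refine (ContinuousLinearMap.lpPairing_eq_integral _ _ _).trans (integral_congr_ae ?_)
    filter_upwards [ContinuousMap.coeFn_toLp (p := ∞) AddCircle.haarAddCircle (𝕜 := ℂ) ψ,
      hF.coeFn_toL1] with x hψ hFx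
    exact congrArg₂ (· • ·) hψ hFx
  have hΛ0 : Λ = 0 := by
    refine ContinuousLinearMap.ext_on (s := Set.range (@fourier T)) ?_ ?_
    · exact Submodule.dense_iff_topologicalClosure_eq_top.2 span_fourier_closure_eq_top
    · rintro _ ⟨n, rfl⟩
      simpa [fourierCoeff, hΛ] using h (-n)
  let _ : NormedSpace ℝ E := NormedSpace.restrictScalars ℝ ℂ E
  refine ae_eq_zero_of_forall_integral_boundedContinuous_smul_eq_zero hF fun φ => ?_
  let ψ : C(AddCircle T, ℂ) := ⟨fun x => ((φ x : ℝ) : ℂ), by fun_prop⟩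
  calc ∫ x, (φ x : ℝ) • F x ∂AddCircle.haarAddCircle
      = Λ ψ := by rw [hΛ]; rfl
    _ = 0 := by rw [hΛ0]; rfl

lemma fourierCoeff_const (c : E) (n : ℤ) :
    fourierCoeff (fun _ : AddCircle T => c) n = if n = 0 then c else 0 := by
  have hone : ∫ x : AddCircle T, fourier (-n) x ∂AddCircle.haarAddCircle =
      if n = 0 then 1 else 0 := by
    simpa [fourierCoeff, Pi.single_apply] using congrFun (fourierCoeff_fourier (T := T) 0) n
  rw [fourierCoeff, integral_smul_const, hone, ite_smul, one_smul, zero_smul]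

lemma ae_eq_const_of_fourierCoeff_eq_zero (hF : Integrable F AddCircle.haarAddCircle)
    (h : ∀ n ≠ 0, fourierCoeff F n = 0) :
    F =ᵐ[AddCircle.haarAddCircle] fun _ => fourierCoeff F 0 := by
  have hcoeff (n : ℤ) : fourierCoeff (F + fun _ => -fourierCoeff F 0) n = 0 := by
    rw [fourierCoeff.add hF (integrable_const _), Pi.add_apply, fourierCoeff_const]
    split_ifs with hn
    · rw [hn, add_neg_cancel]
    · rw [h n hn, add_zero]
  filter_upwards [ae_eq_zero_of_fourierCoeff_eq_zero (hF.add (integrable_const _)) hcoeff] with x hx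
  exact add_neg_eq_zero.1 hx

lemma fourierCoeffOn_const {a b : ℝ} (hab : a < b) (c : E) (n : ℤ) :
    fourierCoeffOn hab (fun _ => c) n = if n = 0 then c else 0 :=
  have : Fact (0 < b - a) := ⟨sub_pos.2 hab⟩
  fourierCoeff_const c n

lemma ae_eq_const_of_fourierCoeffOn_eq_zero {a b : ℝ} (hab : a < b) {F : ℝ → ℂ}
    (hF : Integrable F (volume.restrict (Set.Ioc a b)))
    (h : ∀ n ≠ 0, fourierCoeffOn hab F n = 0) :
    F =ᵐ[volume.restrict (Set.Ioc a b)] fun _ => fourierCoeffOn hab F 0 := by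
  have : Fact (0 < b - a) := ⟨sub_pos.2 hab⟩
  have hIoc : Set.Ioc a (a + (b - a)) = Set.Ioc a b := by rw [add_sub_cancel]
  have hlift : Integrable (AddCircle.liftIoc (b - a) a F) AddCircle.haarAddCircle := by
    rw [← memLp_one_iff_integrable] at hF ⊢
    exact (MemLp.memLp_liftIoc (hIoc.symm ▸ hF)).haarAddCircle
  have hvol : AddCircle.liftIoc (b - a) a F =ᵐ[volume] fun _ => fourierCoeffOn hab F 0 := by
    rw [AddCircle.volume_eq_smul_haarAddCircle]
    exact Measure.ae_smul_measure (ae_eq_const_of_fourierCoeff_eq_zero hlift h) _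
  have hmk := AddCircle.measurePreserving_mk (b - a) a
  rw [hIoc] at hmk
  filter_upwards [hmk.quasiMeasurePreserving.ae hvol, ae_restrict_mem measurableSet_Ioc]
    with x hx hxI
  rwa [AddCircle.liftIoc_coe_apply (hIoc ▸ hxI)] at hx

end FourierUniqueness

lemma support_map_ite {α X : Type*} [MeasurableSpace α] {μ : Measure α} [TopologicalSpace X]
    [T1Space X] [MeasurableSpace X] [OpensMeasurableSpace X] {E : Set α} (hE : MeasurableSet E)
    (hEpos : 0 < μ E) (hEcpos : 0 < μ Eᶜ) (b c : X) :
    (μ.map fun x => if x ∈ E then b else c).support = {b, c} := by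
  have hmeas : Measurable fun x => if x ∈ E then b else c :=
    measurable_const.ite hE measurable_const
  have hclosed : IsClosed ({b, c} : Set X) := (Set.toFinite _).isClosed
  refine Set.Subset.antisymm (Measure.support_subset_of_isClosed hclosed ?_) ?_
  · refine (ae_map_iff hmeas.aemeasurable hclosed.measurableSet).2 (ae_of_all _ fun x => ?_)
    exact ite_eq_or_eq _ _ _
  · have hmem {d : X} {s : Set α} (hs : 0 < μ s) (hd : ∀ x ∈ s, (if x ∈ E then b else c) = d) :
        d ∈ (μ.map fun x => if x ∈ E then b else c).support := by
      refine (Measure.mem_support_iff_forall d).2 fun U hU => ?_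
      refine hs.trans_le ((measure_mono fun x hx => ?_).trans
        (Measure.le_map_apply hmeas.aemeasurable U))
      exact Set.mem_preimage.2 ((hd x hx).symm ▸ mem_of_mem_nhds hU)
    exact Set.insert_subset (hmem hEpos fun x hx => if_pos hx)
      (Set.singleton_subset_iff.2 (hmem hEcpos fun x hx => if_neg hx))

section MultiplicationOperator

variable {𝕜 α : Type*} [RCLike 𝕜] [MeasurableSpace α] {μ : Measure α} {p : ℝ≥0∞}

lemma memLp_unimodular_mul {u : α → Circle} (hu : AEStronglyMeasurable u μ) (f : Lp ℂ p μ) :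
    MemLp (fun x => (u x : ℂ) * f x) p μ := by
  refine (Lp.memLp f).congr_norm ?_ (ae_of_all _ fun x => ?_)
  · have hcoe : Continuous ((↑) : Circle → ℂ) := by fun_prop
    exact (hcoe.comp_aestronglyMeasurable hu).mul (Lp.aestronglyMeasurable f)
  · rw [norm_mul, Circle.norm_coe, one_mul]

variable [Fact (1 ≤ p)]

/-- `A` is the multiplication operator on `Lᵖ(μ)` with symbol `a`. Measurability and
essential boundedness of `a` are not part of the notion: for finite `μ`, the existence of `A` forces
both. -/
def IsMultiplicationBy (a : α → 𝕜) (A : Lp 𝕜 p μ →L[𝕜] Lp 𝕜 p μ) : Prop :=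
  ∀ f : Lp 𝕜 p μ, A f =ᵐ[μ] fun x => a x * f x

namespace IsMultiplicationBy

variable {a : α → 𝕜} {A : Lp 𝕜 p μ →L[𝕜] Lp 𝕜 p μ}

lemma algebraMap_sub (hA : IsMultiplicationBy a A) (z : 𝕜) :
    IsMultiplicationBy (fun x => z - a x) (algebraMap 𝕜 (Lp 𝕜 p μ →L[𝕜] Lp 𝕜 p μ) z - A) := by
  intro f
  rw [Algebra.algebraMap_eq_smul_one]
  change ⇑(z • f - A f) =ᵐ[μ] _
  filter_upwards [hA f, Lp.coeFn_sub (z • f) (A f), Lp.coeFn_smul z f] with x hx hsub hsmul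
  rw [hsub, Pi.sub_apply, hsmul, hx, Pi.smul_apply, smul_eq_mul, sub_mul]

lemma aestronglyMeasurable [IsFiniteMeasure μ] (hA : IsMultiplicationBy a A) :
    AEStronglyMeasurable a μ := by
  refine (Lp.aestronglyMeasurable (A (Lp.const p μ 1))).congr ?_
  filter_upwards [hA (Lp.const p μ 1), Lp.coeFn_const p μ (1 : 𝕜)] with x hx h1
  rw [hx, h1, Function.const_apply, mul_one]

lemma bijective [IsFiniteMeasure μ] (hA : IsMultiplicationBy a A) {ε : ℝ} (hε : 0 < ε)
    (hbelow : ∀ᵐ x ∂μ, ε ≤ ‖a x‖) : Function.Bijective A := by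
  have hne : ∀ᵐ x ∂μ, a x ≠ 0 := hbelow.mono fun x hx => norm_pos_iff.1 (hε.trans_le hx)
  constructor
  · refine (injective_iff_map_eq_zero A).2 fun f hf => Lp.ext ?_
    filter_upwards [hA f, hne, Lp.coeFn_zero 𝕜 p μ] with x hx hax h0
    rw [hf, h0, Pi.zero_apply, zero_eq_mul, or_iff_right hax] at hx
    rw [hx, h0, Pi.zero_apply]
  · intro g
    have hmem : MemLp (fun x => (a x)⁻¹ * g x) p μ := by
      refine (Lp.memLp g).of_le_mul (c := ε⁻¹) ?_ ?_
      · exact hA.aestronglyMeasurable.aemeasurable.inv.aestronglyMeasurable.mul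
          (Lp.aestronglyMeasurable g)
      · filter_upwards [hbelow] with x hx
        rw [norm_mul, norm_inv]
        gcongr
    refine ⟨hmem.toLp, Lp.ext ?_⟩
    filter_upwards [hA hmem.toLp, hmem.coeFn_toLp, hne] with x hx hg hax
    rw [hx, hg, mul_inv_cancel_left₀ hax]

lemma exists_norm_lt_mul_norm [IsFiniteMeasure μ] (hA : IsMultiplicationBy a A) {ε : ℝ}
    (hsmall : ¬∀ᵐ x ∂μ, ε ≤ ‖a x‖) {δ : ℝ} (hδ : ε < δ) : ∃ f, ‖A f‖ < δ * ‖f‖ := by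
  have hnull : NullMeasurableSet {x | ‖a x‖ < ε} μ :=
    hA.aestronglyMeasurable.norm.aemeasurable.nullMeasurableSet_preimage measurableSet_Iio
  obtain ⟨s, hsub, hs, hseq⟩ := hnull.exists_measurable_subset_ae_eq
  have hpos : μ s ≠ 0 := by
    rw [measure_congr hseq]
    simpa only [ae_iff, not_le] using hsmall
  let f : Lp 𝕜 p μ := indicatorConstLp p hs (measure_ne_top μ s) 1
  have hf : 0 < ‖f‖ := by
    rw [norm_indicatorConstLp' (zero_lt_one.trans_le Fact.out).ne' hpos, norm_one, one_mul]
    exact Real.rpow_pos_of_pos (ENNReal.toReal_pos hpos (measure_ne_top μ s)) _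
  refine ⟨f, lt_of_le_of_lt ?_ (mul_lt_mul_of_pos_right hδ hf)⟩
  refine Lp.norm_le_mul_norm_of_ae_le_mul ?_
  filter_upwards [hA f, indicatorConstLp_coeFn (p := p) (hs := hs) (c := (1 : 𝕜))] with x hx hfx
  rw [hx, norm_mul, hfx]
  by_cases hxs : x ∈ s
  · gcongr
    exact (hsub hxs).le
  · simp [hxs]

lemma isUnit_iff [IsFiniteMeasure μ] (hA : IsMultiplicationBy a A) :
    IsUnit A ↔ ∃ ε > 0, ∀ᵐ x ∂μ, ε ≤ ‖a x‖ := by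
  rw [ContinuousLinearMap.isUnit_iff_bijective]
  refine ⟨fun hbij => ?_, fun ⟨ε, hε, hbelow⟩ => hA.bijective hε hbelow⟩
  obtain ⟨-, K, hanti⟩ := A.bijective_iff_dense_range_and_antilipschitz.1 hbij
  have hK : (0 : ℝ) < K + 1 := by positivity
  refine ⟨(2 * (K + 1 : ℝ))⁻¹, by positivity, ?_⟩
  by_contra hsmall
  obtain ⟨f, hf⟩ := hA.exists_norm_lt_mul_norm hsmall
    (δ := ((K : ℝ) + 1)⁻¹) (inv_strictAnti₀ hK (by linarith))
  rw [inv_mul_eq_div, lt_div_iff₀' hK] at hf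
  have hle : ‖f‖ ≤ K * ‖A f‖ := by simpa using hanti.le_mul_dist f 0
  linarith [norm_nonneg (A f)]

lemma spectrum_eq [IsFiniteMeasure μ] (hA : IsMultiplicationBy a A) :
    spectrum 𝕜 A = (μ.map a).support := by
  ext z
  rw [spectrum.mem_iff, (hA.algebraMap_sub z).isUnit_iff,
    Metric.nhds_basis_ball.mem_measureSupport]
  push Not
  refine forall₂_congr fun ε _ => ?_
  rw [Measure.map_apply_of_aemeasurable hA.aestronglyMeasurable.aemeasurable measurableSet_ball,
    pos_iff_ne_zero, frequently_ae_iff]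
  simp only [← dist_eq_norm, dist_comm z]
  rfl

lemma comm {b : α → 𝕜} {B : Lp 𝕜 p μ →L[𝕜] Lp 𝕜 p μ}
    (hA : IsMultiplicationBy a A) (hB : IsMultiplicationBy b B) (f : Lp 𝕜 p μ) :
    A (B f) = B (A f) := by
  refine Lp.ext ?_
  filter_upwards [hA (B f), hB f, hB (A f), hA f] with x hAB hBf hBA hAf
  rw [hAB, hBf, hBA, hAf, mul_left_comm]

lemma isSelfAdjoint {r : α → ℝ} {A : Lp 𝕜 2 μ →L[𝕜] Lp 𝕜 2 μ}
    (hA : IsMultiplicationBy (fun x => (r x : 𝕜)) A) : IsSelfAdjoint A := by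
  refine A.isSelfAdjoint_iff_isSymmetric.2 fun f g => ?_
  rw [L2.inner_def, L2.inner_def]
  refine integral_congr_ae ?_
  filter_upwards [hA f, hA g] with x hf hg
  rw [ContinuousLinearMap.coe_coe, hf, hg]
  simp only [← smul_eq_mul, inner_smul_left, inner_smul_right, RCLike.conj_ofReal]

end IsMultiplicationBy

/-- Multiplication by a function `u` with values in the unit circle, as an isometry of `Lᵖ(μ)`. -/
def unimodularMul {u : α → Circle} (hu : AEStronglyMeasurable u μ) :
    Lp ℂ p μ →ₗᵢ[ℂ] Lp ℂ p μ where
  toFun f := (memLp_unimodular_mul hu f).toLp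
  map_add' f g := by
    rw [← MemLp.toLp_add]
    refine MemLp.toLp_congr _ _ ?_
    filter_upwards [Lp.coeFn_add f g] with x hx
    rw [hx, Pi.add_apply, Pi.add_apply, mul_add]
  map_smul' c f := by
    rw [RingHom.id_apply, ← MemLp.toLp_const_smul]
    refine MemLp.toLp_congr _ _ ?_
    filter_upwards [Lp.coeFn_smul c f] with x hx
    rw [hx, Pi.smul_apply, Pi.smul_apply, smul_eq_mul, smul_eq_mul, mul_left_comm]
  norm_map' f := by
    change ‖(memLp_unimodular_mul hu f).toLp‖ = ‖f‖
    rw [Lp.norm_toLp, Lp.norm_def]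
    refine congrArg _ (eLpNorm_congr_norm_ae (ae_of_all _ fun x => ?_))
    rw [norm_mul, Circle.norm_coe, one_mul]

lemma isMultiplicationBy_unimodularMul {u : α → Circle} (hu : AEStronglyMeasurable u μ) :
    IsMultiplicationBy (p := p) (fun x => (u x : ℂ)) (unimodularMul hu).toContinuousLinearMap :=
  fun f => (memLp_unimodular_mul hu f).coeFn_toLp

end MultiplicationOperator

instance isFiniteMeasure_mπ : IsFiniteMeasure mπ :=
  inferInstanceAs (IsFiniteMeasure (volume.restrict _))

/-- Multiplication by `e^{ikx}` on `L²(-π, π)`, the `k`-th power of the bilateral shift. -/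
def fourierShift (k : ℤ) : Hsp →ₗᵢ[ℂ] Hsp :=
  unimodularMul (u := fun x => Circle.exp (k * x)) (Continuous.aestronglyMeasurable (by fun_prop))

lemma isMultiplicationBy_fourierShift (k : ℤ) :
    IsMultiplicationBy (p := 2) (μ := mπ) (fun x => Complex.exp (Complex.I * k * x))
      (fourierShift k).toContinuousLinearMap := by
  rw [fourierShift]
  have hexp (x : ℝ) : Complex.exp (Complex.I * k * x) = Circle.exp (k * x) := by
    rw [Circle.coe_exp, Complex.ofReal_mul, Complex.ofReal_intCast, mul_comm Complex.I,
      mul_right_comm]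
  simpa only [hexp] using isMultiplicationBy_unimodularMul _

lemma coeFn_fourierShift (k : ℤ) (f : Hsp) :
    fourierShift k f =ᵐ[mπ] fun x => Complex.exp (Complex.I * k * x) * f x :=
  isMultiplicationBy_fourierShift k f

lemma fourierShift_fourierShift (j k : ℤ) (f : Hsp) :
    fourierShift j (fourierShift k f) = fourierShift (j + k) f := by
  refine Lp.ext ?_
  filter_upwards [coeFn_fourierShift j (fourierShift k f), coeFn_fourierShift k f,
    coeFn_fourierShift (j + k) f] with x hj hk hjk
  rw [hj, hk, hjk, ← mul_assoc, ← Complex.exp_add, Int.cast_add, mul_add, add_mul]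

lemma fourierShift_zero (f : Hsp) : fourierShift 0 f = f := by
  refine Lp.ext ?_
  filter_upwards [coeFn_fourierShift 0 f] with x hx
  rw [hx, Int.cast_zero, mul_zero, zero_mul, Complex.exp_zero, one_mul]

lemma inner_fourierShift_left (k : ℤ) (f g : Hsp) :
    inner ℂ (fourierShift k f) g = inner ℂ f (fourierShift (-k) g) := by
  rw [← (fourierShift (-k)).inner_map_map, fourierShift_fourierShift, neg_add_cancel,
    fourierShift_zero]

lemma inner_fourierShift_eq_fourierCoeffOn (k : ℤ) (f g : Hsp) :
    inner ℂ (fourierShift k f) g = (2 * Real.pi) •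
      fourierCoeffOn (neg_lt_self Real.pi_pos) (fun x => inner ℂ (f x) (g x)) k := by
  rw [fourierCoeffOn_eq_integral, smul_smul, sub_neg_eq_add, ← two_mul, mul_one_div,
    div_self Real.two_pi_pos.ne', one_smul, L2.inner_def,
    intervalIntegral.integral_of_le (neg_le_self Real.pi_pos.le)]
  refine integral_congr_ae ?_
  filter_upwards [coeFn_fourierShift k f] with x hx
  have hfourier : fourier (-k) (x : AddCircle (2 * Real.pi)) =
      (starRingEnd ℂ) (Complex.exp (Complex.I * k * x)) := by
    rw [fourier_neg, fourier_coe_apply]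
    push_cast
    congr 2
    field_simp
  rw [hfourier, hx, ← smul_eq_mul (Complex.exp _), inner_smul_left, smul_eq_mul]

/-- The exponential `e^{ikx}` as an element of `L²(-π, π)`. -/
def fourierVec (k : ℤ) : Hsp := fourierShift k (Lp.const 2 mπ 1)

lemma coeFn_fourierVec (k : ℤ) :
    fourierVec k =ᵐ[mπ] fun x => Complex.exp (Complex.I * k * x) := by
  filter_upwards [coeFn_fourierShift k (Lp.const 2 mπ 1), Lp.coeFn_const 2 mπ (1 : ℂ)] with x hx h1
  rw [fourierVec, hx, h1, Function.const_apply, mul_one]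

lemma fourierShift_fourierVec (j k : ℤ) : fourierShift j (fourierVec k) = fourierVec (j + k) :=
  fourierShift_fourierShift j k _

lemma inner_fourierVec (j k : ℤ) :
    inner ℂ (fourierVec j) (fourierVec k) = if j = k then (2 * Real.pi : ℂ) else 0 := by
  have hone : (fun x => inner ℂ (fourierVec k x) (fourierVec k x)) =ᵐ[mπ] fun _ => (1 : ℂ) := by
    filter_upwards [coeFn_fourierVec k] with x hx
    rw [hx, inner_self_eq_norm_sq_to_K]
    simp [Complex.norm_exp]
  calc inner ℂ (fourierVec j) (fourierVec k)
      = inner ℂ (fourierShift (j - k) (fourierVec k)) (fourierVec k) := by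
        rw [fourierShift_fourierVec, sub_add_cancel]
    _ = (2 * Real.pi) • if j - k = 0 then 1 else 0 := by
        rw [inner_fourierShift_eq_fourierCoeffOn, fourierCoeffOn_congr_ae _ hone,
          fourierCoeffOn_const]
    _ = if j = k then (2 * Real.pi : ℂ) else 0 := by
        simp [sub_eq_zero]

lemma exists_ae_inner_eq_const {f g : Hsp} (h : ∀ k ≠ 0, inner ℂ (fourierShift k f) g = 0) :
    ∃ c : ℂ, ∀ᵐ x ∂mπ, inner ℂ (f x) (g x) = c := by
  refine ⟨_, ae_eq_const_of_fourierCoeffOn_eq_zero (neg_lt_self Real.pi_pos)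
    (L2.integrable_inner f g) fun k hk => ?_⟩
  exact (smul_eq_zero_iff_right Real.two_pi_pos.ne').1
    ((inner_fourierShift_eq_fourierCoeffOn k f g).symm.trans (h k hk))

lemma IsMultiplicationBy.eq_zero_of_inner_fourierShift_eq_zero {r : ℝ → ℝ} {N : Hsp →L[ℂ] Hsp}
    (hN : IsMultiplicationBy (fun x => (r x : ℂ)) N) (hneg : ∃ᵐ x ∂mπ, r x < 0)
    (hpos : ∃ᵐ x ∂mπ, 0 < r x) {f : Hsp}
    (hf : ∀ k > 0, inner ℂ (fourierShift k f) (N f) = 0) : N f = 0 := by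
  have hreflect (k : ℤ) : inner ℂ (fourierShift (-k) f) (N f) =
      (starRingEnd ℂ) (inner ℂ (fourierShift k f) (N f)) := by
    have hcomm : fourierShift k (N f) = N (fourierShift k f) :=
      (isMultiplicationBy_fourierShift k).comm hN f
    have hsymm : inner ℂ (N f) (fourierShift k f) = inner ℂ f (N (fourierShift k f)) :=
      hN.isSelfAdjoint.isSymmetric f (fourierShift k f)
    rw [inner_fourierShift_left, neg_neg, inner_conj_symm, hcomm, hsymm]
  obtain ⟨c, hc⟩ := exists_ae_inner_eq_const (f := f) (g := N f) fun k hk => by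
    rcases hk.lt_or_gt with hk | hk
    · rw [← neg_neg k, hreflect, hf _ (neg_pos.2 hk), map_zero]
    · exact hf k hk
  have hre : ∀ᵐ x ∂mπ, r x * ‖f x‖ ^ 2 = c.re := by
    filter_upwards [hc, hN f] with x hx hNx
    rw [hNx, ← smul_eq_mul, inner_smul_right, inner_self_eq_norm_sq_to_K] at hx
    simp [← hx, ← Complex.ofReal_pow]
  obtain ⟨x, hxneg, hx⟩ := (hneg.and_eventually hre).exists
  obtain ⟨y, hypos, hy⟩ := (hpos.and_eventually hre).exists
  have hc0 : c.re = 0 := le_antisymm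
    (hx ▸ mul_nonpos_of_nonpos_of_nonneg hxneg.le (sq_nonneg _))
    (hy ▸ mul_nonneg hypos.le (sq_nonneg _))
  refine Lp.ext ?_
  filter_upwards [hre, hN f, Lp.coeFn_zero ℂ 2 mπ] with x hx hNx h0
  rw [hNx, h0, Pi.zero_apply]
  simpa [hc0] using hx

/-- The linear span of `e^{ikx}`, `k ≥ 0`: the analytic trigonometric polynomials. -/
def analyticPoly : Submodule ℂ Hsp := Submodule.span ℂ (Set.range fun k : ℕ => fourierVec k)

/-- The Hardy space `H²`, as a closed subspace of `L²(-π, π)`. -/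
abbrev hardySpace : Submodule ℂ Hsp := analyticPoly.topologicalClosure

lemma fourierVec_mem_analyticPoly {k : ℤ} (hk : 0 ≤ k) : fourierVec k ∈ analyticPoly := by
  lift k to ℕ using hk
  exact Submodule.subset_span ⟨k, rfl⟩

lemma map_fourierShift_analyticPoly_le {k : ℤ} (hk : 0 ≤ k) :
    analyticPoly.map (fourierShift k).toLinearMap ≤ analyticPoly := by
  refine (Submodule.map_span_le _ _ _).2 ?_
  rintro _ ⟨j, rfl⟩
  rw [LinearIsometry.coe_toLinearMap, fourierShift_fourierVec]
  exact fourierVec_mem_analyticPoly (by positivity)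

lemma fourierShift_mem_hardySpace {k : ℤ} (hk : 0 ≤ k) {v : Hsp} (hv : v ∈ hardySpace) :
    fourierShift k v ∈ hardySpace := by
  refine map_mem_closure (fourierShift k).continuous hv fun w hw => ?_
  exact map_fourierShift_analyticPoly_le hk ⟨w, hw, rfl⟩

lemma inner_fourierVec_of_mem_hardySpace {k : ℤ} (hk : k < 0) {v : Hsp} (hv : v ∈ hardySpace) :
    inner ℂ (fourierVec k) v = 0 := by
  have hle : hardySpace ≤ (ℂ ∙ fourierVec k)ᗮ := by
    refine Submodule.topologicalClosure_minimal _ (Submodule.span_le.2 ?_)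
      (Submodule.isClosed_orthogonal _)
    rintro _ ⟨j, rfl⟩
    rw [SetLike.mem_coe, Submodule.mem_orthogonal_singleton_iff_inner_right, inner_fourierVec,
      if_neg (by lia)]
  exact Submodule.mem_orthogonal_singleton_iff_inner_right.1 (hle hv)

lemma fourierVec_ne_zero (k : ℤ) : fourierVec k ≠ 0 := fun h => by
  have h2π := inner_fourierVec k k
  rw [h, inner_zero_left, if_pos rfl] at h2π
  exact Complex.two_pi_I_ne_zero (by rw [← h2π, zero_mul])

namespace IsMultiplicationBy

variable {r : ℝ → ℝ} {N : Hsp →L[ℂ] Hsp}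

lemma exists_mem_hardySpace_norm_lt (hN : IsMultiplicationBy (fun x => (r x : ℂ)) N)
    (hneg : ∃ᵐ x ∂mπ, r x < 0) (hpos : ∃ᵐ x ∂mπ, 0 < r x) {ε : ℝ} (hε : 0 < ε) :
    ∃ v ∈ hardySpace, ‖hardySpace.starProjection (N v)‖ < ε * ‖v‖ := by
  by_contra! hbelow
  have hsurj : Function.Surjective (compression hardySpace N) :=
    surjective_of_isSelfAdjoint_of_le_norm (isSelfAdjoint_compression _ hN.isSelfAdjoint) hε
      fun v => hbelow v v.2
  have hone : fourierVec 0 ∈ hardySpace :=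
    analyticPoly.le_topologicalClosure (fourierVec_mem_analyticPoly le_rfl)
  obtain ⟨f, hf⟩ := hsurj ⟨fourierVec 0, hone⟩
  have hTf : hardySpace.starProjection (N f) = fourierVec 0 := congrArg Subtype.val hf
  have hNf : N f = 0 := hN.eq_zero_of_inner_fourierShift_eq_zero hneg hpos fun k hk => by
    have hmem := fourierShift_mem_hardySpace hk.le f.2
    rw [← Submodule.starProjection_eq_self_iff.2 hmem,
      Submodule.inner_starProjection_left_eq_right, hTf, inner_fourierShift_left,
      fourierShift_fourierVec, add_zero, inner_eq_zero_symm]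
    exact inner_fourierVec_of_mem_hardySpace (neg_lt_zero.2 hk) f.2
  rw [hNf, map_zero] at hTf
  exact fourierVec_ne_zero 0 hTf.symm

lemma exists_mem_analyticPoly_norm_lt (hN : IsMultiplicationBy (fun x => (r x : ℂ)) N)
    (hneg : ∃ᵐ x ∂mπ, r x < 0) (hpos : ∃ᵐ x ∂mπ, 0 < r x) {ε : ℝ} (hε : 0 < ε) :
    ∃ v ∈ analyticPoly, ‖hardySpace.starProjection (N v)‖ < ε * ‖v‖ := by
  obtain ⟨v, hv, hlt⟩ := hN.exists_mem_hardySpace_norm_lt hneg hpos hε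
  have hopen : IsOpen {v : Hsp | ‖hardySpace.starProjection (N v)‖ < ε * ‖v‖} :=
    isOpen_lt (by fun_prop) (by fun_prop)
  obtain ⟨w, hlt, hw⟩ := mem_closure_iff.1 hv _ hopen hlt
  exact ⟨w, hw, hlt⟩

end IsMultiplicationBy

/-- The space `L_n` of trigonometric polynomials of degree at most `n`. -/
def trigPoly (n : ℕ) : Submodule ℂ Hsp :=
  Submodule.span ℂ (fourierVec '' {k : ℤ | |k| ≤ (n : ℤ)})

instance finiteDimensional_trigPoly (n : ℕ) : FiniteDimensional ℂ (trigPoly n) :=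
  have hfin : {k : ℤ | |k| ≤ (n : ℤ)}.Finite :=
    (Set.finite_Icc (-n : ℤ) n).subset fun _ hk => abs_le.1 hk.out
  .span_of_finite ℂ (hfin.image _)

instance nontrivial_trigPoly (n : ℕ) : Nontrivial (trigPoly n) :=
  Submodule.nontrivial_iff_ne_bot.2 <| Submodule.ne_bot_iff _ |>.2
    ⟨fourierVec 0, Submodule.subset_span ⟨0, by simp, rfl⟩, fourierVec_ne_zero 0⟩

lemma map_fourierShift_trigPoly_le (n : ℕ) :
    (trigPoly n).map (fourierShift n).toLinearMap ≤ analyticPoly := by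
  refine (Submodule.map_span_le _ _ _).2 ?_
  rintro _ ⟨k, hk, rfl⟩
  rw [LinearIsometry.coe_toLinearMap, fourierShift_fourierVec]
  exact fourierVec_mem_analyticPoly (by linarith [(abs_le.1 hk.out).1])

lemma eventually_fourierShift_neg_mem_trigPoly {v : Hsp} (hv : v ∈ analyticPoly) :
    ∀ᶠ n : ℕ in atTop, fourierShift (-n) v ∈ trigPoly n := by
  induction hv using Submodule.span_induction with
  | mem v hv =>
    obtain ⟨k, rfl⟩ := hv
    filter_upwards [eventually_ge_atTop k] with n hn
    rw [fourierShift_fourierVec]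
    have hdeg : |(-n + k : ℤ)| ≤ n := abs_le.2 (by lia)
    exact Submodule.subset_span ⟨-n + k, hdeg, rfl⟩
  | zero => simp
  | add v w _ _ hv hw =>
    filter_upwards [hv, hw] with n hv hw
    exact map_add (fourierShift (-n)) v w ▸ add_mem hv hw
  | smul c v _ hv =>
    filter_upwards [hv] with n hv
    exact map_smul (fourierShift (-n)) c v ▸ Submodule.smul_mem _ c hv

namespace IsMultiplicationBy

lemma norm_starProjection_trigPoly_le {a : ℝ → ℂ} {A : Hsp →L[ℂ] Hsp}
    (hA : IsMultiplicationBy a A) (n : ℕ) (v : Hsp) :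
    ‖(trigPoly n).starProjection (A (fourierShift (-n) v))‖ ≤
      ‖hardySpace.starProjection (A v)‖ := by
  have hcomm : fourierShift n (A (fourierShift (-n) v)) = A v := by
    rw [← LinearIsometry.coe_toContinuousLinearMap, (isMultiplicationBy_fourierShift n).comm hA,
      LinearIsometry.coe_toContinuousLinearMap, fourierShift_fourierShift, add_neg_cancel,
      fourierShift_zero]
  exact hcomm ▸ norm_starProjection_le_of_map_le
    ((map_fourierShift_trigPoly_le n).trans analyticPoly.le_topologicalClosure) _

lemma eventually_exists_hasEigenvalue_compression_dist_lt {m : ℝ → ℝ} {M : Hsp →L[ℂ] Hsp}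
    (hM : IsMultiplicationBy (fun x => (m x : ℂ)) M) {t : ℝ} (hlt : ∃ᵐ x ∂mπ, m x < t)
    (hgt : ∃ᵐ x ∂mπ, t < m x) {ε : ℝ} (hε : 0 < ε) :
    ∀ᶠ n in atTop, ∃ z, Module.End.HasEigenvalue (compression (trigPoly n) M).toLinearMap z ∧
      dist z t < ε := by
  have hN : IsMultiplicationBy (fun x => ((t - m x : ℝ) : ℂ))
      (algebraMap ℂ (Hsp →L[ℂ] Hsp) t - M) := by
    simpa only [Complex.ofReal_sub] using hM.algebraMap_sub t
  obtain ⟨v, hv, hsmall⟩ := hN.exists_mem_analyticPoly_norm_lt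
    (hgt.mono fun x => sub_neg.2) (hlt.mono fun x => sub_pos.2) hε
  filter_upwards [eventually_fourierShift_neg_mem_trigPoly hv] with n hn
  let w : trigPoly n := ⟨fourierShift (-n) v, hn⟩
  have hsymm := (isSelfAdjoint_compression (trigPoly n) hM.isSelfAdjoint).isSymmetric
  simp only [dist_eq_norm]
  refine exists_hasEigenvalue_norm_sub_lt hsymm (v := w) ?_
  calc ‖compression (trigPoly n) M w - (t : ℂ) • w‖
      = ‖(trigPoly n).starProjection ((algebraMap ℂ (Hsp →L[ℂ] Hsp) t - M) w)‖ :=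
        norm_compression_apply_sub_smul _ _ _ _
    _ ≤ ‖hardySpace.starProjection ((algebraMap ℂ (Hsp →L[ℂ] Hsp) t - M) v)‖ :=
        hN.norm_starProjection_trigPoly_le n v
    _ < ε * ‖v‖ := hsmall
    _ = ε * ‖w‖ := by rw [Submodule.coe_norm, (fourierShift (-n)).norm_map]

end IsMultiplicationBy

lemma eq_starProjection_of_isSelfAdjoint_of_isIdempotentElem {𝕜 H : Type*} [RCLike 𝕜]
    [NormedAddCommGroup H] [InnerProductSpace 𝕜 H] [CompleteSpace H] {P : H →L[𝕜] H}
    (hPsa : IsSelfAdjoint P) (hPidem : IsIdempotentElem P) {K : Submodule 𝕜 H}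
    [K.HasOrthogonalProjection] (hP : LinearMap.range (P : H →ₗ[𝕜] H) = K) :
    P = K.starProjection := by
  obtain ⟨_, hPrange⟩ :=
    isStarProjection_iff_eq_starProjection_range.1 (⟨hPidem, hPsa⟩ : IsStarProjection P)
  subst hP
  exact hPrange

theorem every_gap_point_pollutes_for_multiplication_operator_general
    (m : ℝ → ℝ) (M : Hsp →L[ℂ] Hsp) (hM : ∀ f : Hsp, ⇑(M f) =ᵐ[mπ] fun x => (m x : ℂ) * f x)
    (e : ℤ → Hsp) (he : ∀ k : ℤ, ⇑(e k) =ᵐ[mπ] fun x => Complex.exp (Complex.I * k * x))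
    (P : ℕ → Hsp →L[ℂ] Hsp) (hPsa : ∀ n, IsSelfAdjoint (P n))
    (hPidem : ∀ n, IsIdempotentElem (P n))
    (hPrange : ∀ n, LinearMap.range (P n : Hsp →ₗ[ℂ] Hsp) =
      Submodule.span ℂ (e '' {k : ℤ | |k| ≤ (n : ℤ)})) :
    spectrum ℂ M = (mπ.map fun x => (m x : ℂ)).support ∧
    ∀ μ₀ : ℝ, (∃ᵐ x ∂mπ, m x < μ₀) → (∃ᵐ x ∂mπ, μ₀ < m x) →
      ∃ ms : ℕ → ℂ,
        (∀ n, ∃ v, v ∈ LinearMap.range (P n : Hsp →ₗ[ℂ] Hsp) ∧ v ≠ 0 ∧ P n (M v) = ms n • v) ∧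
        Tendsto ms atTop (𝓝 (μ₀ : ℂ)) := by
  have hmul : IsMultiplicationBy (fun x => (m x : ℂ)) M := hM
  obtain rfl : e = fourierVec :=
    funext fun k => Lp.ext ((he k).trans (coeFn_fourierVec k).symm)
  have hP (n : ℕ) : P n = (trigPoly n).starProjection :=
    eq_starProjection_of_isSelfAdjoint_of_isIdempotentElem (hPsa n) (hPidem n) (hPrange n)
  refine ⟨hmul.spectrum_eq, fun μ₀ hlt hgt => ?_⟩
  obtain ⟨ms, hms, hlim⟩ := exists_seq_tendsto_of_eventually_exists_dist_lt
    (s := fun n => {z | Module.End.HasEigenvalue (compression (trigPoly n) M).toLinearMap z})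
    (fun n => Module.End.exists_eigenvalue _) fun ε hε =>
      hmul.eventually_exists_hasEigenvalue_compression_dist_lt hlt hgt hε
  refine ⟨ms, fun n => ?_, hlim⟩
  obtain ⟨v, hv⟩ := (hms n).exists_hasEigenvector
  refine ⟨v, (hPrange n).symm ▸ v.2, Submodule.coe_eq_zero.not.2 hv.2, ?_⟩
  rw [hP n]
  exact congrArg Subtype.val hv.apply_eq_smul

/-- For the multiplication operator `M` by the symbol `m = 1 on E, -1 on Eᶜ` and the
truncations `M_n = P_n M|_{L_n}` to `L_n = span{e^{-inx}, …, e^{inx}}`, every point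
`μ ∈ (-1, 1)` of the spectral gap is a point of spectral pollution:  there are
`μ_n ∈ Spec M_n` with `μ_n → μ`, even though `Spec M = {-1, 1}`. -/
theorem every_gap_point_pollutes_for_multiplication_operator
    (E : Set ℝ) (s : Finset (ℝ × ℝ)) (hE : E = ⋃ p ∈ s, Set.Ioc p.1 p.2)
    (hEsub : E ⊆ Set.Ioc (-Real.pi) Real.pi)
    (hEpos : 0 < volume E)
    (hEcpos : 0 < volume (Set.Ioc (-Real.pi) Real.pi \ E))
    -- `M` is multiplication by the symbol `m`:
    (M : Hsp →L[ℂ] Hsp)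
    (hM : ∀ f : Hsp, ⇑(M f) =ᵐ[mπ] fun x => (if x ∈ E then (1 : ℂ) else -1) * f x)
    -- `e k` is the exponential `e^{ikx}` and `P n` the orthogonal projection onto `L_n`:
    (e : ℤ → Hsp)
    (he : ∀ k : ℤ, ⇑(e k) =ᵐ[mπ] fun x => Complex.exp (Complex.I * k * x))
    (P : ℕ → Hsp →L[ℂ] Hsp)
    (hPsa : ∀ n, IsSelfAdjoint (P n))
    (hPidem : ∀ n, IsIdempotentElem (P n))
    (hPrange : ∀ n, LinearMap.range (P n : Hsp →ₗ[ℂ] Hsp) =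
      Submodule.span ℂ (e '' {k : ℤ | |k| ≤ (n : ℤ)})) :
    spectrum ℂ M = {(-1 : ℂ), 1} ∧
    ∀ μ₀ : ℝ, μ₀ ∈ Set.Ioo (-1 : ℝ) 1 →
      ∃ ms : ℕ → ℂ,
        (∀ n, ∃ v, v ∈ LinearMap.range (P n : Hsp →ₗ[ℂ] Hsp) ∧ v ≠ 0 ∧ P n (M v) = ms n • v) ∧
        Tendsto ms atTop (𝓝 (μ₀ : ℂ)) := by
  have hEm : MeasurableSet E := hE ▸ s.measurableSet_biUnion fun p _ => measurableSet_Ioc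
  have hmπE : 0 < mπ E := by
    rwa [mπ, Measure.restrict_apply hEm, Set.inter_eq_left.2 hEsub]
  have hmπEc : 0 < mπ Eᶜ := by
    rwa [mπ, Measure.restrict_apply hEm.compl, Set.inter_comm, ← Set.sdiff_eq]
  have hfreqE : ∃ᵐ x ∂mπ, x ∈ E := frequently_ae_mem_iff.2 hmπE.ne'
  have hfreqEc : ∃ᵐ x ∂mπ, x ∉ E := frequently_ae_mem_iff.2 hmπEc.ne'
  have hsymbol (x : ℝ) : (if x ∈ E then (1 : ℂ) else -1) =
      ((if x ∈ E then 1 else -1 : ℝ) : ℂ) := by split_ifs <;> simp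
  obtain ⟨hspec, hpoll⟩ := every_gap_point_pollutes_for_multiplication_operator_general
    (fun x => if x ∈ E then 1 else -1) M (by simpa only [hsymbol] using hM)
    e he P hPsa hPidem hPrange
  refine ⟨?_, fun μ₀ hμ₀ => hpoll μ₀ (hfreqEc.mono fun x hx => ?_) (hfreqE.mono fun x hx => ?_)⟩
  · simp only [← hsymbol] at hspec
    rw [hspec, support_map_ite hEm hmπE hmπEc, Set.pair_comm]
  · rw [if_neg hx]
    exact hμ₀.1
  · rw [if_pos hx]
    exact hμ₀.2

end
end
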